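/- For every n : ℕ, the number of lambda terms of size n equals the number of black-white trees with n nodes. (Equivalently, the maps LtoBw and BwtoL of the paper are mutually inverse size-preserving bijections between lambda terms and black-white trees.) -/

import Mathlib

/-- Lambda terms with de Bruijn indices. -/
inductive Term : Type
  | var : ℕ → Term
  | app : Term → Term → Term
  | abs : Term → Term

namespace Term

/-- Natural size: every operator (zero, successor, application, abstraction) has size 1. -/
def size : Term → ℕ
  | var k => k + 1
  | app M N => M.size + N.size + 1
  | abs M => M.size + 1

end Term

/-- `L n` is the number of lambda terms of size `n`. -/
noncomputable def L (n : ℕ) : ℕ := Nat.card {t : Term // t.size = n}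


mutual
  /-- Black-white trees with a black root: a black node has no right child and
  its left subtree is either a black-rooted tree or a (possibly empty) white-rooted tree. -/
  inductive BWBlack : Type
    | blackLeft : BWBlack → BWBlack
    | whiteLeft : BWWhite → BWBlack

  /-- (Possibly empty) white-rooted black-white trees: a white node has a possibly empty
  white-rooted left subtree and an optional black-rooted right subtree. -/
  inductive BWWhite : Type
    | empty : BWWhite
    | whiteLeft : BWWhite → BWWhite
    | whiteLeftBlackRight : BWWhite → BWBlack → BWWhite
end

mutual
  /-- Number of nodes of a black-rooted black-white tree. -/
  def BWBlack.size : BWBlack → ℕ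
    | .blackLeft t => t.size + 1
    | .whiteLeft t => t.size + 1

  /-- Number of nodes of a (possibly empty) white-rooted black-white tree. -/
  def BWWhite.size : BWWhite → ℕ
    | .empty => 0
    | .whiteLeft t => t.size + 1
    | .whiteLeftBlackRight t t' => t.size + t'.size + 1
end

/-- `k` black nodes stacked above a black node whose left subtree is `w`. -/
def mkBlack (w : BWWhite) : ℕ → BWBlack
  | 0 => .whiteLeft w
  | k + 1 => .blackLeft (mkBlack w k)

theorem mkBlack_size (w : BWWhite) (k : ℕ) : (mkBlack w k).size = w.size + k + 1 := by
  induction k with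
  | zero => simp [mkBlack, BWBlack.size]
  | succ k ih => simp only [mkBlack, BWBlack.size, ih]; omega

/-- Head index and white tree of operations of a term. -/
def termSpine : Term → ℕ × BWWhite
  | .var k => (k, .empty)
  | .abs M => ((termSpine M).1, .whiteLeft (termSpine M).2)
  | .app M N => ((termSpine M).1,
      .whiteLeftBlackRight (termSpine M).2 (mkBlack (termSpine N).2 (termSpine N).1))

/-- The map from terms to black-white trees. -/
def LtoBw (t : Term) : BWBlack := mkBlack (termSpine t).2 (termSpine t).1

mutual
  /-- Translate a black tree below `k` black nodes. -/
  def blackTerm : BWBlack → ℕ → Term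
    | .blackLeft b, k => blackTerm b (k + 1)
    | .whiteLeft w, k => whiteTerm w k

  /-- Translate a white tree, with head index `k`. -/
  def whiteTerm : BWWhite → ℕ → Term
    | .empty, k => .var k
    | .whiteLeft w, k => .abs (whiteTerm w k)
    | .whiteLeftBlackRight w b, k => .app (whiteTerm w k) (blackTerm b 0)
end

theorem blackTerm_mkBlack (w : BWWhite) (k j : ℕ) :
    blackTerm (mkBlack w k) j = whiteTerm w (k + j) := by
  induction k generalizing j with
  | zero => simp [mkBlack, blackTerm]
  | succ k ih => simp only [mkBlack, blackTerm, ih]; congr 1; omega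

theorem whiteTerm_spine (t : Term) : whiteTerm (termSpine t).2 (termSpine t).1 = t := by
  induction t with
  | var k => simp [termSpine, whiteTerm]
  | abs M ih => simp [termSpine, whiteTerm, ih]
  | app M N ih1 ih2 => simp [termSpine, whiteTerm, ih1, ih2, blackTerm_mkBlack]

/-- Put `k` black nodes on top of a black tree. -/
def addBlack (b : BWBlack) : ℕ → BWBlack
  | 0 => b
  | k + 1 => .blackLeft (addBlack b k)

theorem addBlack_left (b : BWBlack) (k : ℕ) :
    addBlack (.blackLeft b) k = .blackLeft (addBlack b k) := by
  induction k with
  | zero => rfl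
  | succ k ih => simp [addBlack, ih]

theorem addBlack_white (w : BWWhite) (k : ℕ) :
    addBlack (.whiteLeft w) k = mkBlack w k := by
  induction k with
  | zero => rfl
  | succ k ih => simp [addBlack, mkBlack, ih]

mutual
  theorem LtoBw_blackTerm : ∀ (b : BWBlack) (k : ℕ), LtoBw (blackTerm b k) = addBlack b k
    | .blackLeft b, k => by
        rw [blackTerm, LtoBw_blackTerm b (k + 1), addBlack_left, addBlack]
    | .whiteLeft w, k => by
        rw [blackTerm, LtoBw, spine_whiteTerm w k, addBlack_white]

  theorem spine_whiteTerm : ∀ (w : BWWhite) (k : ℕ), termSpine (whiteTerm w k) = (k, w)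
    | .empty, k => by simp [whiteTerm, termSpine]
    | .whiteLeft w, k => by simp [whiteTerm, termSpine, spine_whiteTerm w k]
    | .whiteLeftBlackRight w b, k => by
        have h := LtoBw_blackTerm b 0
        simp only [LtoBw, addBlack] at h
        simp [whiteTerm, termSpine, spine_whiteTerm w k, h]
end

theorem LtoBw_size (t : Term) : (LtoBw t).size = t.size := by
  rw [LtoBw]
  induction t with
  | var k => simp [termSpine, mkBlack_size, BWWhite.size, Term.size]
  | abs M ih =>
    simp only [mkBlack_size, termSpine, BWWhite.size, Term.size] at *
    omega
  | app M N ih1 ih2 =>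
    simp only [mkBlack_size, termSpine, BWWhite.size, Term.size] at *
    omega

/-- Lambda terms are in bijection with black-white trees. -/
def termEquivBlack : Term ≃ BWBlack where
  toFun := LtoBw
  invFun b := blackTerm b 0
  left_inv t := by simp only [LtoBw, blackTerm_mkBlack, Nat.add_zero, whiteTerm_spine]
  right_inv b := by simp only [LtoBw_blackTerm, addBlack]

theorem lambda_equinumerous_blackWhite :
    ∀ n : ℕ, L n = Nat.card {b : BWBlack // b.size = n} := by
  intro n
  unfold L
  exact Nat.card_congr (termEquivBlack.subtypeEquiv fun t => by
    change t.size = n ↔ (LtoBw t).size = n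
    rw [LtoBw_size])
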